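/- arXiv:2304.07673 — 3 statements merged into one kernel-verified Lean document; each statement's English description precedes it below -/
import Mathlib

section
/- (Diagonal case of Proposition 1.) In the noise-free closed loop with x₀ = 0 and all reference inputs equal to zero except the reference x_j^r at a single stage j ∈ {1,...,K}, the measurement at stage j equals y_j = C_j B_j L_{R_j} x_j^r. -/
open Matrix BigOperators

theorem stmt3
    (K : ℕ) (hK : 1 ≤ K)
    (m n p : ℕ → ℕ)
    (A : ∀ k : ℕ, Matrix (Fin (m k)) (Fin (m (k - 1))) ℝ)
    (B : ∀ k : ℕ, Matrix (Fin (m k)) (Fin (p k)) ℝ)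
    (C : ∀ k : ℕ, Matrix (Fin (n k)) (Fin (m k)) ℝ)
    (L : ∀ k : ℕ, Matrix (Fin (p k)) (Fin (m (k - 1))) ℝ)
    (LR : ∀ k : ℕ, Matrix (Fin (p k)) (Fin (m k)) ℝ)
    (Km : ∀ k : ℕ, Matrix (Fin (m k)) (Fin (n k)) ℝ)
    (j : ℕ) (hj1 : 1 ≤ j) (hjK : j ≤ K)
    (xr : ∀ k : ℕ, Fin (m k) → ℝ)
    (hxr : ∀ k, k ≠ j → xr k = 0)
    (x : ∀ k : ℕ, Fin (m k) → ℝ) (y : ∀ k : ℕ, Fin (n k) → ℝ)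
    (u : ∀ k : ℕ, Fin (p k) → ℝ) (xhat : ∀ k : ℕ, Fin (m k) → ℝ)
    (hy0 : y 0 = C 0 *ᵥ x 0)
    (hxhat0 : xhat 0 = Km 0 *ᵥ y 0)
    (hu : ∀ k, 1 ≤ k → k ≤ K → u k = L k *ᵥ xhat (k - 1) + LR k *ᵥ xr k)
    (hx : ∀ k, 1 ≤ k → k ≤ K → x k = A k *ᵥ x (k - 1) + B k *ᵥ u k)
    (hy : ∀ k, 1 ≤ k → k ≤ K → y k = C k *ᵥ x k)
    (hxhat : ∀ k, 1 ≤ k → k ≤ K →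
      xhat k = (A k *ᵥ xhat (k - 1) + B k *ᵥ u k)
        + Km k *ᵥ (y k - C k *ᵥ (A k *ᵥ xhat (k - 1) + B k *ᵥ u k)))
    (hx0 : x 0 = 0)
    :
    y j = (C j * (B j * LR j)) *ᵥ xr j := by
  have key : ∀ k, k < j → x k = 0 ∧ xhat k = 0 := by
    intro k
    induction k with
    | zero =>
      intro _
      refine ⟨hx0, ?_⟩
      rw [hxhat0, hy0, hx0, mulVec_zero, mulVec_zero]
    | succ k ih =>
      intro hk
      obtain ⟨h1, h2⟩ := ih (by omega)
      have a1 : 1 ≤ k + 1 := by omega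
      have a2 : k + 1 ≤ K := by omega
      have g1 : x (k + 1 - 1) = 0 := h1
      have g2 : xhat (k + 1 - 1) = 0 := h2
      have hu0 : u (k + 1) = 0 := by
        rw [hu _ a1 a2, g2, hxr _ (by omega), mulVec_zero, mulVec_zero, add_zero]
      have hxk : x (k + 1) = 0 := by
        rw [hx _ a1 a2, g1, hu0, mulVec_zero, mulVec_zero, add_zero]
      refine ⟨hxk, ?_⟩
      rw [hxhat _ a1 a2, hy _ a1 a2, hxk, g2, hu0]
      simp only [mulVec_zero, add_zero, sub_zero]
  obtain ⟨h1, h2⟩ := key (j - 1) (by omega)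
  rw [hy j hj1 hjK, hx j hj1 hjK, hu j hj1 hjK, h1, h2]
  simp only [mulVec_zero, zero_add, mulVec_mulVec]
end

section
/- (First-column case of Proposition 1, general i, proved by induction in Appendix A.) In the noise-free closed loop with all reference inputs equal to zero, for every i with 3 ≤ i ≤ K+1 the measurement at stage i−1 equals y_{i−1} = h_{i1} x₀, where h_{i1} = C_{i−1} [ (∏_{k=1}^{i−2} (A_{i−k} + B_{i−k} L_{i−k})) (A₁ + B₁ L₁ K₀ C₀) − Σ_{j=1}^{i−3} ( (∏_{k=1}^{j} (A_{i−k} + B_{i−k} L_{i−k})) B_{i−(j+1)} L_{i−(j+1)} (∏_{c=j+2}^{i−1} (I − K_{i−c} C_{i−c}) A_{i−c}) (I − K₀ C₀) ) − B_{i−1} L_{i−1} (∏_{m=2}^{i−1} (I − K_{i−m} C_{i−m}) A_{i−m}) (I − K₀ C₀) ], and in every displayed product the factors are multiplied in order of increasing value of the product index (so stage indices decrease from left to right). -/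
open Matrix BigOperators

/-- Product of stage-indexed matrix factors `F (lo+1), ..., F hi`, multiplied with
decreasing stage index from left to right: `F hi * F (hi-1) * ... * F (lo+1)`
(the identity matrix when `hi = lo`, a junk zero matrix when `hi < lo`). -/
def chainProd (m : ℕ → ℕ) (F : ∀ k : ℕ, Matrix (Fin (m k)) (Fin (m (k - 1))) ℝ)
    (hi lo : ℕ) : Matrix (Fin (m hi)) (Fin (m lo)) ℝ :=
  if _h : lo < hi then F hi * chainProd m F (hi - 1) lo
  else Matrix.of fun r c => if (r : ℕ) = (c : ℕ) ∧ hi = lo then 1 else 0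
termination_by hi
decreasing_by omega

theorem chainProd_step (m : ℕ → ℕ) (F : ∀ k : ℕ, Matrix (Fin (m k)) (Fin (m (k - 1))) ℝ)
    (hi lo : ℕ) (h : lo < hi) :
    chainProd m F hi lo = F hi * chainProd m F (hi - 1) lo := by
  rw [chainProd, dif_pos h]

theorem chainProd_self (m : ℕ → ℕ) (F : ∀ k : ℕ, Matrix (Fin (m k)) (Fin (m (k - 1))) ℝ)
    (k : ℕ) : chainProd m F k k = 1 := by
  rw [chainProd, dif_neg (lt_irrefl k)]
  ext r c
  simp [Matrix.one_apply, Fin.ext_iff]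

/-- Solution of an affine recursion `x k = F k x (k-1) - w k`. -/
theorem affine_solution (m : ℕ → ℕ) (F : ∀ k : ℕ, Matrix (Fin (m k)) (Fin (m (k - 1))) ℝ)
    (x w : ∀ k : ℕ, Fin (m k) → ℝ) (K : ℕ)
    (h : ∀ k, 2 ≤ k → k ≤ K → x k = F k *ᵥ x (k - 1) - w k) :
    ∀ k, 1 ≤ k → k ≤ K →
      x k = chainProd m F k 1 *ᵥ x 1 - ∑ s ∈ Finset.Icc 2 k, chainProd m F k s *ᵥ w s := by
  intro k hk
  induction k, hk using Nat.le_induction with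
  | base => intro _; simp [chainProd_self]
  | succ k hk ih =>
    intro hkK
    have ih' : x (k + 1 - 1) = chainProd m F (k + 1 - 1) 1 *ᵥ x 1
        - ∑ s ∈ Finset.Icc 2 k, chainProd m F (k + 1 - 1) s *ᵥ w s := ih (by omega)
    rw [h (k + 1) (by omega) hkK, ih', Finset.sum_Icc_succ_top (by omega), chainProd_self,
      chainProd_step m F (k + 1) 1 (by omega), Matrix.mulVec_sub, Matrix.mulVec_sum,
      Matrix.one_mulVec, Matrix.mulVec_mulVec, sub_sub]
    congr 2
    refine Finset.sum_congr rfl fun s hs => ?_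
    rw [Finset.mem_Icc] at hs
    rw [chainProd_step m F (k + 1) s (by omega), Matrix.mulVec_mulVec]

theorem stmt6
    (K : ℕ) (hK : 1 ≤ K)
    (m n p : ℕ → ℕ)
    (A : ∀ k : ℕ, Matrix (Fin (m k)) (Fin (m (k - 1))) ℝ)
    (B : ∀ k : ℕ, Matrix (Fin (m k)) (Fin (p k)) ℝ)
    (C : ∀ k : ℕ, Matrix (Fin (n k)) (Fin (m k)) ℝ)
    (L : ∀ k : ℕ, Matrix (Fin (p k)) (Fin (m (k - 1))) ℝ)
    (LR : ∀ k : ℕ, Matrix (Fin (p k)) (Fin (m k)) ℝ)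
    (Km : ∀ k : ℕ, Matrix (Fin (m k)) (Fin (n k)) ℝ)
    (xr : ∀ k : ℕ, Fin (m k) → ℝ)
    (hxr : ∀ k, 1 ≤ k → k ≤ K → xr k = 0)
    (x : ∀ k : ℕ, Fin (m k) → ℝ) (y : ∀ k : ℕ, Fin (n k) → ℝ)
    (u : ∀ k : ℕ, Fin (p k) → ℝ) (xhat : ∀ k : ℕ, Fin (m k) → ℝ)
    (hy0 : y 0 = C 0 *ᵥ x 0)
    (hxhat0 : xhat 0 = Km 0 *ᵥ y 0)
    (hu : ∀ k, 1 ≤ k → k ≤ K → u k = L k *ᵥ xhat (k - 1) + LR k *ᵥ xr k)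
    (hx : ∀ k, 1 ≤ k → k ≤ K → x k = A k *ᵥ x (k - 1) + B k *ᵥ u k)
    (hy : ∀ k, 1 ≤ k → k ≤ K → y k = C k *ᵥ x k)
    (hxhat : ∀ k, 1 ≤ k → k ≤ K →
      xhat k = (A k *ᵥ xhat (k - 1) + B k *ᵥ u k)
        + Km k *ᵥ (y k - C k *ᵥ (A k *ᵥ xhat (k - 1) + B k *ᵥ u k)))
    :
    ∀ i, 3 ≤ i → i ≤ K + 1 →
      y (i - 1) =
        (C (i - 1) *
          (chainProd m (fun b => A b + B b * L b) (i - 1) 1 * (A 1 + B 1 * (L 1 * (Km 0 * C 0)))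
            - ∑ j ∈ Finset.Icc 1 (i - 3),
                chainProd m (fun b => A b + B b * L b) (i - 1) (i - j - 1)
                  * (B (i - j - 1) * L (i - j - 1))
                  * (chainProd m (fun s => (1 - Km s * C s) * A s) (i - j - 1 - 1) 0
                      * (1 - Km 0 * C 0))
            - B (i - 1) * L (i - 1)
                * (chainProd m (fun s => (1 - Km s * C s) * A s) (i - 1 - 1) 0
                    * (1 - Km 0 * C 0)))) *ᵥ x 0 := by
  intro i hi3 hiK
  have hu' : ∀ k, 1 ≤ k → k ≤ K → u k = L k *ᵥ xhat (k - 1) := by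
    intro k h1 h2
    rw [hu k h1 h2, hxr k h1 h2, Matrix.mulVec_zero, add_zero]
  -- estimation error
  have he : ∀ k, k ≤ K → x k - xhat k =
      (chainProd m (fun s => (1 - Km s * C s) * A s) k 0 * (1 - Km 0 * C 0)) *ᵥ x 0 := by
    intro k
    induction k with
    | zero =>
      intro _
      rw [chainProd_self, Matrix.one_mul, hxhat0, hy0, Matrix.sub_mulVec, Matrix.one_mulVec,
        Matrix.mulVec_mulVec]
    | succ k ih =>
      intro hk
      have ih' : x (k + 1 - 1) - xhat (k + 1 - 1) =
        (chainProd m (fun s => (1 - Km s * C s) * A s) (k + 1 - 1) 0 * (1 - Km 0 * C 0)) *ᵥ x 0 :=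
        ih (by omega)
      rw [chainProd_step _ _ (k + 1) 0 (by omega), Matrix.mul_assoc, ← Matrix.mulVec_mulVec, ← ih',
        hxhat (k + 1) (by omega) hk, hy (k + 1) (by omega) hk, hx (k + 1) (by omega) hk]
      simp only [← Matrix.mulVec_mulVec, Matrix.sub_mulVec, Matrix.mulVec_sub, Matrix.mulVec_add,
        Matrix.one_mulVec]
      abel
  have hrec : ∀ k, 2 ≤ k → k ≤ K → x k = (fun b => A b + B b * L b) k *ᵥ x (k - 1)
      - (fun s => (B s * L s) *ᵥ (x (s - 1) - xhat (s - 1))) k := by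
    intro k h1 h2
    simp only []
    rw [hx k (by omega) h2, hu' k (by omega) h2]
    simp only [← Matrix.mulVec_mulVec, Matrix.add_mulVec, Matrix.mulVec_sub]
    abel
  have hsol := affine_solution m (fun b => A b + B b * L b) x
    (fun s => (B s * L s) *ᵥ (x (s - 1) - xhat (s - 1))) K hrec (i - 1) (by omega) (by omega)
  have hx1 : x 1 = (A 1 + B 1 * (L 1 * (Km 0 * C 0))) *ᵥ x 0 := by
    have hh : xhat (1 - 1) = Km 0 *ᵥ (C 0 *ᵥ x 0) := by
      rw [← hy0]; exact hxhat0
    rw [hx 1 le_rfl hK, hu' 1 le_rfl hK, hh, Matrix.add_mulVec]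
    simp only [← Matrix.mulVec_mulVec]
  rw [hy (i - 1) (by omega) (by omega), ← Matrix.mulVec_mulVec]
  congr 1
  rw [hsol, hx1, Matrix.sub_mulVec, Matrix.sub_mulVec, Matrix.mulVec_mulVec, sub_sub,
    Matrix.sum_mulVec]
  congr 1
  obtain ⟨N, rfl⟩ : ∃ N, i = N + 3 := ⟨i - 3, by omega⟩
  have hsplit : Finset.Icc 2 (N + 3 - 1) = insert (N + 3 - 1) (Finset.Icc 2 (N + 1)) := by
    ext a; simp only [Finset.mem_Icc, Finset.mem_insert]; omega
  rw [hsplit, Finset.sum_insert (by simp), chainProd_self, Matrix.one_mulVec,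
    he (N + 3 - 1 - 1) (by omega), Matrix.mulVec_mulVec]
  refine (add_comm _ _).trans ?_
  congr 1
  refine Finset.sum_nbij' (fun s => N + 3 - s - 1) (fun j => N + 3 - j - 1) ?_ ?_ ?_ ?_ ?_
  · intro a ha; simp only [Finset.mem_Icc] at ha ⊢; omega
  · intro a ha; simp only [Finset.mem_Icc] at ha ⊢; omega
  · intro a ha; simp only [Finset.mem_Icc] at ha ⊢; omega
  · intro a ha; simp only [Finset.mem_Icc] at ha ⊢; omega
  · intro a ha
    rw [Finset.mem_Icc] at ha
    have hs : N + 3 - (N + 3 - a - 1) - 1 = a := by omega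
    rw [hs, he (a - 1) (by omega), Matrix.mulVec_mulVec, Matrix.mulVec_mulVec, Matrix.mul_assoc]
end

section
/- (General propagation case of Proposition 2, proved by induction in Appendix B.) In the attacked noise-free closed loop with x₀ = 0, all reference inputs zero, and all injections zero except the injection at block stage j−1 (1-based block index j), for every block index i with i ≥ j+2 and i ≤ K+1 the attacked data at stage i−1 equals y_{i−1}^a = h̃_{ij} δ_{j−1}, where h̃_{ij} = C_{i−1} [ (∏_{m=1}^{i−(j+1)} (A_{i−m} + B_{i−m} L_{i−m})) B_j L_j + Σ_{c=1}^{i−(j+2)} ( (∏_{m=1}^{c} (A_{i−m} + B_{i−m} L_{i−m})) B_{i−(c+1)} L_{i−(c+1)} (∏_{b=c+2}^{i−j} (I − K_{i−b} C_{i−b}) A_{i−b}) ) + B_{i−1} L_{i−1} (∏_{c=2}^{i−j} (I − K_{i−c} C_{i−c}) A_{i−c}) ] K_j, where in every displayed product the factors are multiplied in order of increasing value of the product index (so stage indices decrease from left to right). -/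
open Matrix BigOperators

/-- The factor leading from stage `k` to stage `k + 1`. -/
def stp (m : ℕ → ℕ) (F : ∀ k : ℕ, Matrix (Fin (m k)) (Fin (m (k - 1))) ℝ) (k : ℕ) :
    Matrix (Fin (m (k + 1))) (Fin (m k)) ℝ := F (k + 1)

theorem chainProd_succ (m : ℕ → ℕ) (F : ∀ k : ℕ, Matrix (Fin (m k)) (Fin (m (k - 1))) ℝ)
    (k t : ℕ) (h : t ≤ k) :
    chainProd m F (k + 1) t
      = stp m F k * chainProd m F k t := by
  rw [chainProd, dif_pos (by omega)]
  rfl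

/-- One summand: the contribution of stage `t` to the state at stage `k`. -/
def Gterm (m : ℕ → ℕ) (F H M : ∀ k : ℕ, Matrix (Fin (m k)) (Fin (m (k - 1))) ℝ)
    (s k t : ℕ) : Matrix (Fin (m k)) (Fin (m s)) ℝ :=
  chainProd m F k t * M t * chainProd m H (t - 1) s

theorem Gsum_succ (m : ℕ → ℕ) (F H M : ∀ k : ℕ, Matrix (Fin (m k)) (Fin (m (k - 1))) ℝ)
    (s k : ℕ) (h : s ≤ k) :
    ∑ t ∈ Finset.Icc (s + 1) (k + 1), Gterm m F H M s (k + 1) t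
      = stp m F k
          * ∑ t ∈ Finset.Icc (s + 1) k, Gterm m F H M s k t
        + stp m M k * chainProd m H k s := by
  rw [Finset.sum_Icc_succ_top (by omega), Matrix.mul_sum]
  congr 1
  · refine Finset.sum_congr rfl fun t ht => ?_
    rw [Finset.mem_Icc] at ht
    unfold Gterm
    rw [chainProd_succ _ _ _ _ ht.2]
    simp only [Matrix.mul_assoc]
  · unfold Gterm
    rw [chainProd_self, Matrix.one_mul]
    rfl

theorem Icc_split {X : Type*} [AddCommMonoid X] (s d : ℕ) (G : ℕ → X) :
    ∑ t ∈ Finset.Icc (s + 1) (s + (d + 2)), G t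
      = G (s + 1) + ∑ c ∈ Finset.Icc 1 (s + d + 3 - (s + 1 + 2)), G (s + d + 3 - c - 1)
        + G (s + (d + 2)) := by
  rw [show s + (d + 2) = (s + d + 1) + 1 by omega]
  rw [Finset.sum_Icc_succ_top (by omega), ← Finset.add_sum_Ioc_eq_sum_Icc (by omega)]
  congr 2
  refine Finset.sum_bij' (fun t _ => s + d + 2 - t) (fun c _ => s + d + 3 - c - 1) ?_ ?_ ?_ ?_ ?_
  all_goals
    intro t ht
    simp only [Finset.mem_Icc, Finset.mem_Ioc] at ht ⊢
  · omega
  · omega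
  · omega
  · omega
  · congr 1
    omega

/-- Block indices `i j ∈ {1, ..., K+1}` correspond to stages `i-1`, `j-1`.  The trailing
Kalman-gain factor is the gain at the attacked stage `j-1` (the paper writes `K_j` in its
block-index convention). -/
theorem stmt11
    (K : ℕ) (hK : 1 ≤ K)
    (m n p : ℕ → ℕ)
    (A : ∀ k : ℕ, Matrix (Fin (m k)) (Fin (m (k - 1))) ℝ)
    (B : ∀ k : ℕ, Matrix (Fin (m k)) (Fin (p k)) ℝ)
    (C : ∀ k : ℕ, Matrix (Fin (n k)) (Fin (m k)) ℝ)
    (L : ∀ k : ℕ, Matrix (Fin (p k)) (Fin (m (k - 1))) ℝ)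
    (LR : ∀ k : ℕ, Matrix (Fin (p k)) (Fin (m k)) ℝ)
    (Km : ∀ k : ℕ, Matrix (Fin (m k)) (Fin (n k)) ℝ)
    (i j : ℕ) (hj1 : 1 ≤ j) (hij : j + 2 ≤ i) (hiK : i ≤ K + 1)
    (xr : ∀ k : ℕ, Fin (m k) → ℝ)
    (hxr : ∀ k, 1 ≤ k → k ≤ K → xr k = 0)
    (δ : ∀ k : ℕ, Fin (n k) → ℝ)
    (hδ : ∀ k, k ≤ K → k ≠ j - 1 → δ k = 0)
    (xa : ∀ k : ℕ, Fin (m k) → ℝ) (ya : ∀ k : ℕ, Fin (n k) → ℝ)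
    (ua : ∀ k : ℕ, Fin (p k) → ℝ) (xhata : ∀ k : ℕ, Fin (m k) → ℝ)
    (hy0a : ya 0 = C 0 *ᵥ xa 0)
    (hxhat0a : xhata 0 = Km 0 *ᵥ (ya 0 + δ 0))
    (hua : ∀ k, 1 ≤ k → k ≤ K → ua k = L k *ᵥ xhata (k - 1) + LR k *ᵥ xr k)
    (hxa : ∀ k, 1 ≤ k → k ≤ K → xa k = A k *ᵥ xa (k - 1) + B k *ᵥ ua k)
    (hya : ∀ k, 1 ≤ k → k ≤ K → ya k = C k *ᵥ xa k)
    (hxhata : ∀ k, 1 ≤ k → k ≤ K →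
      xhata k = (A k *ᵥ xhata (k - 1) + B k *ᵥ ua k)
        + Km k *ᵥ ((ya k + δ k) - C k *ᵥ (A k *ᵥ xhata (k - 1) + B k *ᵥ ua k)))
    (hxa0 : xa 0 = 0)
    :
    ya (i - 1) + δ (i - 1) =
      (C (i - 1) *
        ((chainProd m (fun b => A b + B b * L b) (i - 1) j * (B j * L j)
          + ∑ c ∈ Finset.Icc 1 (i - (j + 2)),
              chainProd m (fun b => A b + B b * L b) (i - 1) (i - c - 1)
                * (B (i - c - 1) * L (i - c - 1))
                * chainProd m (fun s => (1 - Km s * C s) * A s) (i - c - 1 - 1) (j - 1)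
          + B (i - 1) * L (i - 1)
              * chainProd m (fun s => (1 - Km s * C s) * A s) (i - 1 - 1) (j - 1))
          * Km (j - 1))) *ᵥ δ (j - 1) := by
  obtain ⟨s, rfl⟩ : ∃ s, j = s + 1 := ⟨j - 1, by omega⟩
  obtain ⟨d, rfl⟩ : ∃ d, i = s + d + 3 := ⟨i - (s + 3), by omega⟩
  have hδ' : ∀ k, k ≤ K → k ≠ s → δ k = 0 := hδ
  -- one-step recursions
  have hu : ∀ k, k + 1 ≤ K → ua (k + 1) = L (k + 1) *ᵥ xhata k := by
    intro k hk
    rw [hua (k + 1) (by omega) hk, hxr (k + 1) (by omega) hk, Matrix.mulVec_zero, add_zero]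
    rfl
  have hx : ∀ k, k + 1 ≤ K → xa (k + 1) =
      (A (k + 1) : Matrix (Fin (m (k + 1))) (Fin (m k)) ℝ) *ᵥ xa k
        + B (k + 1) *ᵥ ((L (k + 1) : Matrix (Fin (p (k + 1))) (Fin (m k)) ℝ) *ᵥ xhata k) := by
    intro k hk
    rw [hxa (k + 1) (by omega) hk, hu k hk]
    rfl
  have hxh : ∀ k, k + 1 ≤ K → xhata (k + 1) =
      xa (k + 1) - ((1 - Km (k + 1) * C (k + 1)) *
        (A (k + 1) : Matrix (Fin (m (k + 1))) (Fin (m k)) ℝ)) *ᵥ (xa k - xhata k)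
        + Km (k + 1) *ᵥ δ (k + 1) := by
    intro k hk
    have h1 := hxhata (k + 1) (by omega) hk
    rw [hya (k + 1) (by omega) hk, hu k hk] at h1
    have h2 := hx k hk
    have h1' : xhata (k + 1) =
      ((A (k + 1) : Matrix (Fin (m (k + 1))) (Fin (m k)) ℝ) *ᵥ xhata k
        + B (k + 1) *ᵥ ((L (k + 1) : Matrix (Fin (p (k + 1))) (Fin (m k)) ℝ) *ᵥ xhata k))
        + Km (k + 1) *ᵥ ((C (k + 1) *ᵥ xa (k + 1) + δ (k + 1)) - C (k + 1) *ᵥ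
          ((A (k + 1) : Matrix (Fin (m (k + 1))) (Fin (m k)) ℝ) *ᵥ xhata k
        + B (k + 1) *ᵥ ((L (k + 1) : Matrix (Fin (p (k + 1))) (Fin (m k)) ℝ) *ᵥ xhata k))) := h1
    rw [h1', h2]
    simp only [← Matrix.mulVec_mulVec, Matrix.sub_mulVec, Matrix.one_mulVec, Matrix.mulVec_add,
      Matrix.mulVec_sub]
    abel
  -- before the attack everything vanishes
  have hpre : ∀ k, k ≤ s → xa k = 0 ∧ (xhata k = Km k *ᵥ δ k) := by
    intro k
    induction k with
    | zero =>
      intro _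
      refine ⟨hxa0, ?_⟩
      rw [hxhat0a, hy0a, hxa0, Matrix.mulVec_zero, zero_add]
    | succ k ih =>
      intro hk
      obtain ⟨e1, e2⟩ := ih (by omega)
      rw [hδ' k (by omega) (by omega), Matrix.mulVec_zero] at e2
      have e3 : xa (k + 1) = 0 := by
        rw [hx k (by omega), e1, e2]
        simp
      refine ⟨e3, ?_⟩
      rw [hxh k (by omega), e3, e1, e2]
      simp
  have key : ∀ d, s + d ≤ K →
      xa (s + d) = (∑ t ∈ Finset.Icc (s + 1) (s + d), Gterm m (fun b => A b + B b * L b)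
        (fun s => (1 - Km s * C s) * A s) (fun b => B b * L b) s (s + d) t) *ᵥ (Km s *ᵥ δ s) ∧
      xhata (s + d) = xa (s + d) +
        chainProd m (fun s => (1 - Km s * C s) * A s) (s + d) s *ᵥ (Km s *ᵥ δ s) := by
    intro d
    induction d with
    | zero =>
      intro _
      obtain ⟨e1, e2⟩ := hpre s le_rfl
      refine ⟨?_, ?_⟩
      · simp [e1]
      · change xhata s = xa s + chainProd m (fun s => (1 - Km s * C s) * A s) s s *ᵥ (Km s *ᵥ δ s)
        rw [chainProd_self, e1, e2, Matrix.one_mulVec, zero_add]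
    | succ d ih =>
      intro hd
      obtain ⟨e1, e2⟩ := ih (by omega)
      refine ⟨?_, ?_⟩
      · have h := Gsum_succ m (fun b => A b + B b * L b)
          (fun s => (1 - Km s * C s) * A s) (fun b => B b * L b) s (s + d) (by omega)
        refine Eq.trans ?_ (congrArg (fun Q => Q *ᵥ (Km s *ᵥ δ s)) h.symm)
        refine (hx (s + d) hd).trans ?_
        rw [e2]
        rw [Matrix.add_mulVec, ← Matrix.mulVec_mulVec, ← e1, ← Matrix.mulVec_mulVec]
        erw [Matrix.add_mulVec, ← Matrix.mulVec_mulVec, ← Matrix.mulVec_mulVec]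
        rw [Matrix.mulVec_add, Matrix.mulVec_add]
        exact (add_assoc _ _ _).symm
      · have h := chainProd_succ m (fun s => (1 - Km s * C s) * A s) (s + d) s (by omega)
        refine Eq.trans ?_ (congrArg (fun Q => xa (s + d + 1) + Q *ᵥ (Km s *ᵥ δ s)) h.symm)
        refine (hxh (s + d) hd).trans ?_
        rw [hδ' (s + d + 1) hd (by omega), e2]
        rw [Matrix.mulVec_zero, add_zero, sub_add_cancel_left,
          Matrix.mulVec_neg, sub_neg_eq_add, ← Matrix.mulVec_mulVec (Km s *ᵥ δ s)]
        rfl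
  have hfin := (key (d + 2) (by omega)).1
  have hd0 : δ (s + d + 3 - 1) = 0 := hδ' _ (by omega) (by omega)
  rw [hd0, add_zero, hya _ (by omega) (by omega), ← Matrix.mulVec_mulVec, ← Matrix.mulVec_mulVec]
  congr 1
  refine hfin.trans ?_
  refine congrArg (fun Q => Q *ᵥ (Km s *ᵥ δ s)) ?_
  rw [Icc_split]
  refine congrArg₂ _ (congrArg₂ _ ?_ rfl) ?_
  · unfold Gterm
    erw [chainProd_self, Matrix.mul_one]
    rfl
  · unfold Gterm
    rw [chainProd_self, Matrix.one_mul]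
    rfl
end
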